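/- arXiv:1801.00120 — 3 statements merged into one kernel-verified Lean document; each statement's English description precedes it below -/
import Mathlib

section
/- Let H ∈ (1/2, 1). Define C_n = n^{1+2H} H²(2H−1)² ∫_{[0,1]⁴} tⁿ ξⁿ θⁿ · 1_{[s,1]}(θ) · |t−s|^{2H−2} |ξ−θ|^{2H−2} dξ dθ ds dt. Then lim_{n→∞} C_n = H²(2H−1)·Γ(2H−1). -/
open Filter

/-!
Let `a = b = 2H - 2`, keeping the exponents of `|ξ - θ|` and `|t - s|` apart. Integrating over `s`
first replaces `1_{[s,1]}(θ) |t - s| ^ b` by the Riesz potential of `[0, θ]` at `t`, which is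
continuous in `(t, θ)` although its kernel is singular. What remains is the integral of this
function against the powers `(t θ ξ)ⁿ` for the locally finite measure `dt ⊗ |θ - ξ| ^ a dθ dξ` on
the unit cube. These powers peak at the corner `(1, 1, 1)`, so the normalised integrals tend to the
value of the potential there, `1 / (b + 1)`. The normalising mass is a Beta integral, because the
kernel is symmetric and homogeneous, and Euler's limit for `Γ` shows that it is asymptotic to
`Γ(a + 1) / n ^ (a + 3)`.
-/

open MeasureTheory Set Topology

section Beta

lemma betaIntegral_natCast_add_one_ofReal (n : ℕ) (s : ℝ) :
    Complex.betaIntegral (n + 1) s =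
      ((∫ x in (0 : ℝ)..1, x ^ n * (1 - x) ^ (s - 1) : ℝ) : ℂ) := by
  rw [Complex.betaIntegral, ← intervalIntegral.integral_ofReal]
  refine intervalIntegral.integral_congr fun x hx => ?_
  rw [uIcc_of_le zero_le_one] at hx
  simp only [add_sub_cancel_right, Complex.cpow_natCast, Complex.ofReal_mul, Complex.ofReal_pow,
    Complex.ofReal_cpow (sub_nonneg.2 hx.2), Complex.ofReal_sub, Complex.ofReal_one]

lemma tendsto_rpow_mul_integral_pow_mul_one_sub_rpow {s : ℝ} (hs : 0 < s) :
    Tendsto (fun n : ℕ => (n : ℝ) ^ s * ∫ x in (0 : ℝ)..1, x ^ n * (1 - x) ^ (s - 1))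
      atTop (𝓝 (Real.Gamma s)) := by
  have hGamma := (Complex.continuous_re.tendsto _).comp (Complex.GammaSeq_tendsto_Gamma s)
  rw [Complex.Gamma_ofReal, Complex.ofReal_re] at hGamma
  refine hGamma.congr fun n => ?_
  have hcpow : (n : ℂ) ^ (s : ℂ) = ((n : ℝ) ^ s : ℝ) := by
    rw [Complex.ofReal_cpow n.cast_nonneg, Complex.ofReal_natCast]
  rw [Function.comp_apply, Complex.GammaSeq_eq_betaIntegral_of_re_pos (by simpa using hs),
    Complex.betaIntegral_symm, betaIntegral_natCast_add_one_ofReal, hcpow, ← Complex.ofReal_mul,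
    Complex.ofReal_re]

lemma integral_pow_mul_sub_rpow (n : ℕ) (a : ℝ) {r : ℝ} (hr : 0 < r) :
    ∫ x in (0 : ℝ)..r, x ^ n * (r - x) ^ a =
      r ^ (n + 1 + a) * ∫ x in (0 : ℝ)..1, x ^ n * (1 - x) ^ a := by
  have hscale := intervalIntegral.mul_integral_comp_mul_left (a := 0) (b := 1)
    (f := fun x => x ^ n * (r - x) ^ a) (c := r)
  rw [mul_zero, mul_one] at hscale
  rw [← hscale, ← intervalIntegral.integral_const_mul, ← intervalIntegral.integral_const_mul]
  refine intervalIntegral.integral_congr fun x hx => ?_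
  rw [uIcc_of_le zero_le_one] at hx
  have hpow : r ^ (n + 1 + a) = r * (r ^ n * r ^ a) := by
    rw [Real.rpow_add hr, Real.rpow_add_one hr.ne', Real.rpow_natCast]
    ring
  simp only [← mul_one_sub, mul_pow, Real.mul_rpow hr.le (sub_nonneg.2 hx.2), hpow]
  ring

end Beta

section Triangle

variable {E : Type*} [NormedAddCommGroup E] {f : ℝ → ℝ → E} {u v : ℝ}

lemma integrableOn_uncurry_indicator_Ioi {s : Set (ℝ × ℝ)}
    (hf : IntegrableOn (Function.uncurry f) s) :
    IntegrableOn (Function.uncurry fun x y => (Ioi x).indicator (f x) y) s :=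
  hf.indicator (measurableSet_lt measurable_fst measurable_snd)

variable [NormedSpace ℝ E]

lemma intervalIntegral_indicator_Ioi (g : ℝ → E) {x : ℝ} (hx : x ∈ Icc u v) :
    ∫ y in u..v, (Ioi x).indicator g y = ∫ y in x..v, g y := by
  rw [intervalIntegral.integral_of_le (hx.1.trans hx.2), intervalIntegral.integral_of_le hx.2,
    setIntegral_indicator measurableSet_Ioi, Ioc_inter_Ioi, sup_eq_right.2 hx.1]

lemma intervalIntegral_indicator_Iio (g : ℝ → E) {y : ℝ} (hy : y ∈ Icc u v) :
    ∫ x in u..v, (Iio y).indicator g x = ∫ x in u..y, g x := by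
  have hsection : Ioc u v ∩ Iio y = Ioo u y := by
    ext x
    exact ⟨fun h => ⟨h.1.1, h.2⟩, fun h => ⟨⟨h.1, h.2.le.trans hy.2⟩, h.2⟩⟩
  rw [intervalIntegral.integral_of_le (hy.1.trans hy.2), intervalIntegral.integral_of_le hy.1,
    setIntegral_indicator measurableSet_Iio, hsection, integral_Ioc_eq_integral_Ioo]

lemma integral_integral_swap_triangle (huv : u ≤ v)
    (hf : IntegrableOn (Function.uncurry f) (Ioc u v ×ˢ Ioc u v)) :
    ∫ x in u..v, ∫ y in x..v, f x y = ∫ y in u..v, ∫ x in u..y, f x y := by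
  have hswap := intervalIntegral_intervalIntegral_swap
    (F := fun x y => (Ioi x).indicator (f x) y) (a := u) (b := v) (c := u) (d := v)
    (by rw [uIoc_of_le huv]; exact integrableOn_uncurry_indicator_Ioi hf)
  have hupper : ∫ x in u..v, ∫ y in u..v, (Ioi x).indicator (f x) y =
      ∫ x in u..v, ∫ y in x..v, f x y :=
    intervalIntegral.integral_congr fun x hx =>
      intervalIntegral_indicator_Ioi (f x) (uIcc_of_le huv ▸ hx)
  have hlower : ∫ y in u..v, ∫ x in u..v, (Ioi x).indicator (f x) y =
      ∫ y in u..v, ∫ x in u..y, f x y :=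
    intervalIntegral.integral_congr fun y hy =>
      intervalIntegral_indicator_Iio (fun x => f x y) (uIcc_of_le huv ▸ hy)
  rw [← hupper, hswap, hlower]

lemma integral_integral_indicator_Icc_mul {f h : ℝ → ℝ} (huv : u ≤ v)
    (hf : IntervalIntegrable f volume u v) (hh : IntervalIntegrable h volume u v) :
    ∫ s in u..v, ∫ x in u..v, (Icc s v).indicator (fun _ => 1) x * (f s * h x) =
      ∫ x in u..v, (∫ s in u..x, f s) * h x := by
  have hprod : IntegrableOn (Function.uncurry fun s x => f s * h x) (Ioc u v ×ˢ Ioc u v) := by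
    rw [IntegrableOn, Measure.volume_eq_prod, ← Measure.prod_restrict]
    exact Integrable.mul_prod hf.1 hh.1
  have hsection : ∀ s ∈ Ioc u v,
      ∫ x in u..v, (Icc s v).indicator (fun _ => 1) x * (f s * h x) =
        ∫ x in s..v, f s * h x := by
    intro s hs
    have hinter : Ioc u v ∩ Icc s v = Icc s v :=
      inter_eq_right.2 fun x hx => ⟨hs.1.trans_le hx.1, hx.2⟩
    have hindicator (x : ℝ) : (Icc s v).indicator (fun _ => 1) x * (f s * h x) =
        (Icc s v).indicator (fun x => f s * h x) x := by
      simp only [indicator_apply, ite_mul, one_mul, zero_mul]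
    simp only [hindicator]
    rw [intervalIntegral.integral_of_le huv, intervalIntegral.integral_of_le hs.2,
      setIntegral_indicator measurableSet_Icc, hinter, integral_Icc_eq_integral_Ioc]
  rw [intervalIntegral.integral_of_le huv, setIntegral_congr_fun measurableSet_Ioc hsection,
    ← intervalIntegral.integral_of_le huv, integral_integral_swap_triangle huv hprod]
  simp only [intervalIntegral.integral_mul_const]

lemma intervalIntegrable_integral_left (huv : u ≤ v)
    (hf : IntegrableOn (Function.uncurry f) (Ioc u v ×ˢ Ioc u v)) :
    IntervalIntegrable (fun x => ∫ y in u..v, f x y) volume u v := by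
  rw [IntegrableOn, Measure.volume_eq_prod, ← Measure.prod_restrict] at hf
  simp only [intervalIntegral.integral_of_le huv]
  exact (intervalIntegrable_iff_integrableOn_Ioc_of_le huv).2 hf.integral_prod_left

lemma intervalIntegrable_integral_upper_triangle (huv : u ≤ v)
    (hf : IntegrableOn (Function.uncurry f) (Ioc u v ×ˢ Ioc u v)) :
    IntervalIntegrable (fun x => ∫ y in x..v, f x y) volume u v :=
  (intervalIntegrable_integral_left huv (integrableOn_uncurry_indicator_Ioi hf)).congr fun x hx =>
    intervalIntegral_indicator_Ioi (f x) (uIcc_of_le huv ▸ uIoc_subset_uIcc hx)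

lemma integral_integral_eq_two_smul_of_symm (huv : u ≤ v) (hsymm : ∀ x y, f x y = f y x)
    (hf : IntegrableOn (Function.uncurry f) (Ioc u v ×ˢ Ioc u v)) :
    ∫ x in u..v, ∫ y in u..v, f x y = (2 : ℝ) • ∫ x in u..v, ∫ y in u..x, f x y := by
  have hsections : ∀ᵐ x, x ∈ uIoc u v → IntervalIntegrable (f x) volume u v := by
    rw [IntegrableOn, Measure.volume_eq_prod, ← Measure.prod_restrict] at hf
    rw [uIoc_of_le huv, ← ae_restrict_iff' measurableSet_Ioc]
    filter_upwards [hf.prod_right_ae] with x hx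
    exact (intervalIntegrable_iff_integrableOn_Ioc_of_le huv).2 hx
  have hlower : ∫ x in u..v, ∫ y in u..x, f x y =
      ∫ x in u..v, ((∫ y in u..v, f x y) - ∫ y in x..v, f x y) := by
    refine intervalIntegral.integral_congr_ae (hsections.mono fun x hx hxuv => ?_)
    have hxmem := uIoc_subset_uIcc hxuv
    rw [eq_sub_iff_add_eq, intervalIntegral.integral_add_adjacent_intervals
      ((hx hxuv).mono_set (uIcc_subset_uIcc_left hxmem))
      ((hx hxuv).mono_set (uIcc_subset_uIcc_right hxmem))]
  have hupper : ∫ x in u..v, ∫ y in x..v, f x y = ∫ x in u..v, ∫ y in u..x, f x y := by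
    rw [integral_integral_swap_triangle huv hf]
    simp only [hsymm]
  rw [intervalIntegral.integral_sub (intervalIntegrable_integral_left huv hf)
    (intervalIntegrable_integral_upper_triangle huv hf), hupper, eq_sub_iff_add_eq] at hlower
  rw [← hlower, two_smul]

end Triangle

section RieszMeasure

lemma isLocallyFiniteMeasure_withDensity_ofReal {X : Type*} [TopologicalSpace X]
    [MeasurableSpace X] {μ : Measure X} [SFinite μ] {f : X → ℝ} (hf : LocallyIntegrable f μ) :
    IsLocallyFiniteMeasure (μ.withDensity fun x => ENNReal.ofReal (f x)) := by
  refine ⟨fun x => ?_⟩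
  obtain ⟨U, hU, hfU⟩ := hf x
  exact ⟨U, hU, by rw [withDensity_apply']; exact hfU.lintegral_lt_top⟩

lemma locallyIntegrable_comp_sub {G E : Type*} [NormedAddCommGroup G] [LocallyCompactSpace G]
    [SecondCountableTopology G] [MeasurableSpace G] [BorelSpace G] {μ : Measure G}
    [μ.IsAddRightInvariant] [IsFiniteMeasureOnCompacts μ] [SFinite μ]
    [NormedAddCommGroup E] [NormedSpace ℝ E] {f : G → E} (hf : LocallyIntegrable f μ) :
    LocallyIntegrable (fun p : G × G => f (p.1 - p.2)) (μ.prod μ) := by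
  rw [locallyIntegrable_iff]
  intro K hK
  have hdiff : IsCompact ((fun p : G × G => p.1 - p.2) '' K) := hK.image continuous_sub
  have hsnd : IsCompact (Prod.snd '' K) := hK.image continuous_snd
  have hone : Integrable ((Prod.snd '' K).indicator fun _ => (1 : ℝ)) μ :=
    (integrable_indicator_iff hsnd.measurableSet).2 (integrableOn_const hsnd.measure_ne_top)
  have hconv := hone.convolution_integrand (ContinuousLinearMap.lsmul ℝ ℝ)
    ((integrable_indicator_iff hdiff.measurableSet).2 (hf.integrableOn_isCompact hdiff))
  refine hconv.integrableOn.congr_fun (fun p hp => ?_) hK.measurableSet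
  simp only [ContinuousLinearMap.lsmul_apply, indicator_of_mem (mem_image_of_mem Prod.snd hp),
    indicator_of_mem (mem_image_of_mem (fun p : G × G => p.1 - p.2) hp), one_smul]

variable {a : ℝ}

lemma locallyIntegrable_abs_rpow (ha : -1 < a) : LocallyIntegrable fun x : ℝ => |x| ^ a :=
  locallyIntegrable_of_norm_le_rpow (C := 1) (α := -a) (by simp) (by simp; linarith)
    (by simp [abs_of_nonneg, Real.rpow_nonneg]) (measurable_id.abs.pow_const a).aestronglyMeasurable

lemma integrableOn_mul_abs_sub_rpow (ha : -1 < a) {g : ℝ × ℝ → ℝ} (hg : Continuous g)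
    {s : Set (ℝ × ℝ)} (hs : Bornology.IsBounded s) :
    IntegrableOn (fun p => g p * |p.1 - p.2| ^ a) s :=
  (((locallyIntegrable_comp_sub (locallyIntegrable_abs_rpow ha)).integrableOn_isCompact
    hs.isCompact_closure).continuousOn_mul hg.continuousOn hs.isCompact_closure).mono_set
    subset_closure

/-- The measure `|x - y| ^ a dx dy` on the plane. For `a = 2H - 2`, multiplying it by `H(2H - 1)`
gives the covariance measure of fractional Brownian motion with Hurst parameter `H`. -/
noncomputable def rieszMeasure (a : ℝ) : Measure (ℝ × ℝ) :=
  volume.withDensity fun p => ENNReal.ofReal (|p.1 - p.2| ^ a)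

lemma isLocallyFiniteMeasure_rieszMeasure (ha : -1 < a) :
    IsLocallyFiniteMeasure (rieszMeasure a) :=
  isLocallyFiniteMeasure_withDensity_ofReal
    (locallyIntegrable_comp_sub (locallyIntegrable_abs_rpow ha))

instance sFinite_rieszMeasure : SFinite (rieszMeasure a) := by
  unfold rieszMeasure
  infer_instance

instance isOpenPosMeasure_rieszMeasure : (rieszMeasure a).IsOpenPosMeasure := by
  have hdiag : ∀ᵐ p : ℝ × ℝ, p.1 - p.2 ≠ 0 :=
    (quasiMeasurePreserving_sub_of_right_invariant volume volume).ae (Measure.ae_ne volume 0)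
  refine (withDensity_absolutelyContinuous' (by fun_prop) ?_).isOpenPosMeasure
  filter_upwards [hdiag] with p hp
  exact (ENNReal.ofReal_pos.2 (Real.rpow_pos_of_pos (abs_pos.2 hp) a)).ne'

lemma setIntegral_rieszMeasure (ha : -1 < a) {u v : ℝ} (huv : u ≤ v) {g : ℝ × ℝ → ℝ}
    (hg : Continuous g) :
    ∫ p in Icc u v ×ˢ Icc u v, g p ∂rieszMeasure a =
      ∫ x in u..v, ∫ y in u..v, g (x, y) * |x - y| ^ a := by
  have hbdd : Bornology.IsBounded (Icc u v ×ˢ Icc u v) :=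
    (Metric.isBounded_Icc u v).prod (Metric.isBounded_Icc u v)
  have hdensity : ∫ p in Icc u v ×ˢ Icc u v, g p ∂rieszMeasure a =
      ∫ p in Icc u v ×ˢ Icc u v, g p * |p.1 - p.2| ^ a := by
    rw [rieszMeasure, setIntegral_withDensity_eq_setIntegral_toReal_smul' _ (by fun_prop)
      (by simp)]
    simp only [ENNReal.toReal_ofReal (Real.rpow_nonneg (abs_nonneg _) a), smul_eq_mul, mul_comm]
  rw [hdensity, Measure.volume_eq_prod,
    setIntegral_prod _ (integrableOn_mul_abs_sub_rpow ha hg hbdd)]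
  simp only [integral_Icc_eq_integral_Ioc, intervalIntegral.integral_of_le huv]

lemma intervalIntegrable_abs_rpow (ha : -1 < a) (u v : ℝ) :
    IntervalIntegrable (fun x => |x| ^ a) volume u v :=
  ((locallyIntegrable_abs_rpow ha).integrableOn_isCompact isCompact_uIcc).intervalIntegrable

lemma intervalIntegrable_abs_sub_rpow (ha : -1 < a) (t u v : ℝ) :
    IntervalIntegrable (fun x => |t - x| ^ a) volume u v := by
  simpa only [sub_sub_cancel] using
    (intervalIntegrable_abs_rpow ha (t - u) (t - v)).comp_sub_left t

/-- The Riesz potential of the interval `[0, x]` at `t` for the kernel `|t - s| ^ b`: what the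
integral over `s` of the indicator of `θ ∈ [s, 1]` leaves at `x = θ`. -/
noncomputable def rieszPotential (b t x : ℝ) : ℝ :=
  ∫ s in (0 : ℝ)..x, |t - s| ^ b

lemma continuous_rieszPotential {b : ℝ} (hb : -1 < b) :
    Continuous fun p : ℝ × ℝ => rieszPotential b p.1 p.2 := by
  have hprim : Continuous fun x => ∫ r in (0 : ℝ)..x, |r| ^ b :=
    intervalIntegral.continuous_primitive (intervalIntegrable_abs_rpow hb) 0
  have heq (p : ℝ × ℝ) : rieszPotential b p.1 p.2 =
      (∫ r in (0 : ℝ)..p.1, |r| ^ b) - ∫ r in (0 : ℝ)..p.1 - p.2, |r| ^ b := by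
    rw [rieszPotential, intervalIntegral.integral_comp_sub_left (fun r => |r| ^ b), sub_zero,
      intervalIntegral.integral_interval_sub_left (intervalIntegrable_abs_rpow hb _ _)
      (intervalIntegrable_abs_rpow hb _ _)]
  simp only [heq]
  fun_prop

lemma rieszPotential_self {b : ℝ} (hb : -1 < b) {t : ℝ} (ht : 0 ≤ t) :
    rieszPotential b t t = t ^ (b + 1) / (b + 1) := by
  have habs : EqOn (fun r => |r| ^ b) (fun r => r ^ b) (uIcc 0 t) := fun r hr => by
    simp only [abs_of_nonneg (uIcc_of_le ht ▸ hr).1]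
  rw [rieszPotential, intervalIntegral.integral_comp_sub_left (fun r => |r| ^ b), sub_self,
    sub_zero, intervalIntegral.integral_congr habs, integral_rpow (Or.inl hb),
    Real.zero_rpow (by linarith), sub_zero]

end RieszMeasure

section PowRieszEnergy

variable {a : ℝ}

/-- The Riesz energy of the measure `xⁿ dx` on the unit interval for the kernel `|x - y| ^ a`; it
normalises the peak functions `(t θ ξ)ⁿ`. The exponent carries its sign: classically this is the
energy of order `-a`. -/
noncomputable def powRieszEnergy (a : ℝ) (n : ℕ) : ℝ :=
  ∫ x in (0 : ℝ)..1, ∫ y in (0 : ℝ)..1, (x * y) ^ n * |x - y| ^ a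

lemma integrableOn_pow_mul_abs_sub_rpow (ha : -1 < a) (n : ℕ) :
    IntegrableOn (Function.uncurry fun x y : ℝ => (x * y) ^ n * |x - y| ^ a)
      (Ioc 0 1 ×ˢ Ioc 0 1) :=
  integrableOn_mul_abs_sub_rpow ha (g := fun p => (p.1 * p.2) ^ n) (by fun_prop)
    ((Metric.isBounded_Ioc 0 1).prod (Metric.isBounded_Ioc 0 1))

lemma powRieszEnergy_eq (ha : -1 < a) (n : ℕ) :
    powRieszEnergy a n =
      2 / (2 * n + 2 + a) * ∫ x in (0 : ℝ)..1, x ^ n * (1 - x) ^ a := by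
  set B := ∫ x in (0 : ℝ)..1, x ^ n * (1 - x) ^ a
  have hexp : -1 < 2 * n + 1 + a := by linarith [n.cast_nonneg (α := ℝ)]
  have hinner : ∀ x ∈ Ioc (0 : ℝ) 1,
      ∫ y in (0 : ℝ)..x, (x * y) ^ n * |x - y| ^ a = x ^ (2 * n + 1 + a) * B := by
    intro x hx
    have habs : EqOn (fun y => (x * y) ^ n * |x - y| ^ a)
        (fun y => x ^ n * (y ^ n * (x - y) ^ a)) (uIcc 0 x) := fun y hy => by
      simp only [abs_of_nonneg (sub_nonneg.2 (uIcc_of_le hx.1.le ▸ hy).2), mul_pow, mul_assoc]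
    rw [intervalIntegral.integral_congr habs, intervalIntegral.integral_const_mul,
      integral_pow_mul_sub_rpow n a hx.1, ← mul_assoc, ← Real.rpow_natCast x n,
      ← Real.rpow_add hx.1, ← add_assoc, ← add_assoc, ← two_mul]
  rw [powRieszEnergy, integral_integral_eq_two_smul_of_symm zero_le_one
      (fun x y => by rw [mul_comm x, abs_sub_comm]) (integrableOn_pow_mul_abs_sub_rpow ha n),
    intervalIntegral.integral_of_le zero_le_one, setIntegral_congr_fun measurableSet_Ioc hinner,
    ← intervalIntegral.integral_of_le zero_le_one, intervalIntegral.integral_mul_const,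
    integral_rpow (Or.inl hexp), Real.one_rpow, Real.zero_rpow (by linarith), smul_eq_mul]
  ring

lemma tendsto_rpow_mul_powRieszEnergy (ha : -1 < a) :
    Tendsto (fun n : ℕ => (n : ℝ) ^ (a + 2) * powRieszEnergy a n) atTop
      (𝓝 (Real.Gamma (a + 1))) := by
  have hbeta := tendsto_rpow_mul_integral_pow_mul_one_sub_rpow (neg_lt_iff_pos_add.1 ha)
  have hlim := (tendsto_natCast_div_add_atTop (1 + a / 2)).mul hbeta
  rw [one_mul] at hlim
  refine hlim.congr' ((eventually_gt_atTop 0).mono fun n hn => ?_)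
  have hn' : (0 : ℝ) < n := Nat.cast_pos.2 hn
  have hsplit : (n : ℝ) ^ (a + 2) = n ^ (a + 1) * n := by
    rw [← Real.rpow_add_one hn'.ne']
    ring_nf
  have : (2 * n + 2 + a : ℝ) ≠ 0 := by linarith
  have : (n + (1 + a / 2) : ℝ) ≠ 0 := by linarith
  simp only [powRieszEnergy_eq ha, hsplit, add_sub_cancel_right]
  field_simp
  ring

end PowRieszEnergy

section Cube

lemma tendsto_setIntegral_unitCube_pow_mul {μ : Measure (ℝ × ℝ × ℝ)} [IsLocallyFiniteMeasure μ]
    [μ.IsOpenPosMeasure] {g : ℝ × ℝ × ℝ → ℝ} (hg : ContinuousOn g (Icc 0 1)) :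
    Tendsto (fun n : ℕ =>
      (∫ p in Icc 0 1, (p.1 * (p.2.1 * p.2.2)) ^ n ∂μ)⁻¹ *
        ∫ p in Icc 0 1, (p.1 * (p.2.1 * p.2.2)) ^ n * g p ∂μ)
      atTop (𝓝 (g 1)) := by
  have hcorner : (1 : ℝ × ℝ × ℝ) ∈ closure (interior (Icc 0 1)) := by
    simp only [Icc_prod_eq, interior_prod_eq, closure_prod_eq, interior_Icc]
    simp [closure_Ioo, Prod.le_def]
  refine tendsto_setIntegral_pow_smul_of_unique_maximum_of_isCompact_of_continuousOn
    isCompact_Icc (by fun_prop) ?_ ?_ (by simp) hcorner hg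
  · rintro ⟨t, x, y⟩ ⟨⟨ht₀, hx₀, hy₀⟩, ht₁, hx₁, hy₁⟩ hne
    contrapose! hne
    simp only [Prod.fst_zero, Prod.snd_zero, Prod.fst_one, Prod.snd_one] at *
    have hxy : x * y ≤ 1 := mul_le_one₀ hx₁ hy₀ hy₁
    have ht : t = 1 := by nlinarith
    have hx : x = 1 := by nlinarith
    have hy : y = 1 := by nlinarith
    rw [ht, hx, hy, Prod.mk_one_one, Prod.mk_one_one]
  · rintro ⟨t, x, y⟩ ⟨⟨ht, hx, hy⟩, -⟩
    exact mul_nonneg ht (mul_nonneg hx hy)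

variable {a : ℝ}

lemma setIntegral_volume_prod_rieszMeasure (ha : -1 < a) {u v : ℝ} (huv : u ≤ v)
    {g : ℝ × ℝ × ℝ → ℝ} (hg : Continuous g) :
    ∫ p in Icc (u, u, u) (v, v, v), g p ∂volume.prod (rieszMeasure a) =
      ∫ t in u..v, ∫ x in u..v, ∫ y in u..v, g (t, x, y) * |x - y| ^ a := by
  have := isLocallyFiniteMeasure_rieszMeasure ha
  have hint : IntegrableOn g (Icc (u, u, u) (v, v, v)) (volume.prod (rieszMeasure a)) :=
    hg.continuousOn.integrableOn_compact isCompact_Icc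
  rw [← Icc_prod_Icc, ← Icc_prod_Icc] at hint ⊢
  rw [setIntegral_prod _ hint,
    integral_Icc_eq_integral_Ioc, ← intervalIntegral.integral_of_le huv]
  exact intervalIntegral.integral_congr fun t _ =>
    setIntegral_rieszMeasure ha huv (g := fun p => g (t, p)) (by fun_prop)

lemma setIntegral_unitCube_pow_rieszMeasure (ha : -1 < a) (n : ℕ) :
    ∫ p in Icc 0 1, (p.1 * (p.2.1 * p.2.2)) ^ n
      ∂volume.prod (rieszMeasure a) = powRieszEnergy a n / (n + 1) := by
  refine (setIntegral_volume_prod_rieszMeasure ha zero_le_one (by fun_prop)).trans ?_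
  simp only [mul_pow _ (_ * _), mul_assoc, intervalIntegral.integral_const_mul,
    intervalIntegral.integral_mul_const, integral_pow]
  rw [← powRieszEnergy, one_pow, zero_pow n.succ_ne_zero, sub_zero, one_div_mul_eq_div]

lemma integral_indicator_eq_setIntegral_rieszPotential {b : ℝ} (ha : -1 < a) (hb : -1 < b)
    (n : ℕ) :
    ∫ t in (0 : ℝ)..1, ∫ s in (0 : ℝ)..1, ∫ θ in (0 : ℝ)..1, ∫ ξ in (0 : ℝ)..1,
        t ^ n * ξ ^ n * θ ^ n * (Icc s 1).indicator (fun _ => (1 : ℝ)) θ *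
          |t - s| ^ b * |ξ - θ| ^ a =
      ∫ p in Icc 0 1, (p.1 * (p.2.1 * p.2.2)) ^ n * rieszPotential b p.1 p.2.1
        ∂volume.prod (rieszMeasure a) := by
  have hpot := continuous_rieszPotential hb
  refine Eq.trans ?_ (setIntegral_volume_prod_rieszMeasure ha zero_le_one (by fun_prop)).symm
  refine intervalIntegral.integral_congr fun t _ => ?_
  have hf : IntervalIntegrable (fun s => t ^ n * |t - s| ^ b) volume 0 1 :=
    (intervalIntegrable_abs_sub_rpow hb t 0 1).const_mul (t ^ n)
  have hh : IntervalIntegrable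
      (fun θ => ∫ ξ in (0 : ℝ)..1, (θ * ξ) ^ n * |θ - ξ| ^ a) volume 0 1 :=
    intervalIntegrable_integral_left zero_le_one (integrableOn_pow_mul_abs_sub_rpow ha n)
  have hinner (s θ : ℝ) :
      ∫ ξ in (0 : ℝ)..1, t ^ n * ξ ^ n * θ ^ n * (Icc s 1).indicator (fun _ => (1 : ℝ)) θ *
          |t - s| ^ b * |ξ - θ| ^ a =
        (Icc s 1).indicator (fun _ => 1) θ *
          (t ^ n * |t - s| ^ b * ∫ ξ in (0 : ℝ)..1, (θ * ξ) ^ n * |θ - ξ| ^ a) := by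
    simp only [← intervalIntegral.integral_const_mul, mul_pow, abs_sub_comm θ]
    congr! 2
    ring
  have houter (θ : ℝ) :
      ∫ ξ in (0 : ℝ)..1, (t * (θ * ξ)) ^ n * rieszPotential b t θ * |θ - ξ| ^ a =
        (∫ s in (0 : ℝ)..θ, t ^ n * |t - s| ^ b) *
          ∫ ξ in (0 : ℝ)..1, (θ * ξ) ^ n * |θ - ξ| ^ a := by
    rw [intervalIntegral.integral_const_mul, ← rieszPotential,
      ← intervalIntegral.integral_const_mul]
    congr! 2
    ring
  simp only [hinner, houter, integral_integral_indicator_Icc_mul zero_le_one hf hh]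

end Cube

theorem tendsto_rpow_mul_integral_indicator {a b : ℝ} (ha : -1 < a) (hb : -1 < b) :
    Tendsto (fun n : ℕ => (n : ℝ) ^ (a + 3) *
        ∫ t in (0 : ℝ)..1, ∫ s in (0 : ℝ)..1, ∫ θ in (0 : ℝ)..1, ∫ ξ in (0 : ℝ)..1,
          t ^ n * ξ ^ n * θ ^ n * (Icc s 1).indicator (fun _ => (1 : ℝ)) θ *
            |t - s| ^ b * |ξ - θ| ^ a)
      atTop (𝓝 (Real.Gamma (a + 1) / (b + 1))) := by
  have := isLocallyFiniteMeasure_rieszMeasure ha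
  have hpot := continuous_rieszPotential hb
  have henergy := tendsto_rpow_mul_powRieszEnergy ha
  have hpeak := tendsto_setIntegral_unitCube_pow_mul (μ := volume.prod (rieszMeasure a))
    (g := fun p => rieszPotential b p.1 p.2.1) (by fun_prop)
  rw [Prod.snd_one, Prod.fst_one, Prod.fst_one, rieszPotential_self hb zero_le_one,
    Real.one_rpow] at hpeak
  have hlim := ((tendsto_natCast_div_add_atTop (1 : ℝ)).mul henergy).mul hpeak
  rw [one_mul, mul_one_div] at hlim
  have hGamma : Real.Gamma (a + 1) ≠ 0 := (Real.Gamma_pos_of_pos (neg_lt_iff_pos_add.1 ha)).ne'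
  refine hlim.congr' ?_
  filter_upwards [henergy.eventually_ne hGamma, eventually_gt_atTop 0] with n hne hn
  have hn' : (n : ℝ) ≠ 0 := Nat.cast_ne_zero.2 hn.ne'
  have hsplit : (n : ℝ) ^ (a + 3) = n ^ (a + 2) * n := by
    rw [← Real.rpow_add_one hn']
    ring_nf
  have henergy_ne : powRieszEnergy a n ≠ 0 := right_ne_zero_of_mul hne
  rw [integral_indicator_eq_setIntegral_rieszPotential ha hb,
    setIntegral_unitCube_pow_rieszMeasure ha, hsplit]
  field_simp

theorem stmt15_general {H : ℝ} (hH : 1 / 2 < H) :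
    Tendsto
      (fun n : ℕ => (n:ℝ) ^ (1 + 2 * H) * H ^ 2 * (2 * H - 1) ^ 2 *
        ∫ t in (0:ℝ)..1, ∫ s in (0:ℝ)..1, ∫ θ in (0:ℝ)..1, ∫ ξ in (0:ℝ)..1,
          t ^ n * ξ ^ n * θ ^ n * Set.indicator (Set.Icc s 1) (fun _ => (1:ℝ)) θ *
            |t - s| ^ (2 * H - 2) * |ξ - θ| ^ (2 * H - 2))
      atTop (𝓝 (H ^ 2 * (2 * H - 1) * Real.Gamma (2 * H - 1))) := by
  have hexp : -1 < 2 * H - 2 := by linarith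
  have : 2 * H - 1 ≠ 0 := by linarith
  have hlim := (tendsto_rpow_mul_integral_indicator hexp hexp).const_mul (H ^ 2 * (2 * H - 1) ^ 2)
  convert hlim using 2 with n
  · ring_nf
  · rw [show 2 * H - 2 + 1 = 2 * H - 1 by ring]
    field_simp

/-- For `H ∈ (1/2,1)`, the constants
`C_n = n^{1+2H} H²(2H−1)² ∫_{[0,1]⁴} tⁿξⁿθⁿ 1_{[s,1]}(θ) |t−s|^{2H−2}|ξ−θ|^{2H−2} dξdθdsdt`
converge to `H²(2H−1)Γ(2H−1)` as `n → ∞`. -/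
theorem stmt15 (H : ℝ) (hH : H ∈ Set.Ioo (1/2 : ℝ) 1) :
    Tendsto
      (fun n : ℕ => (n:ℝ) ^ (1 + 2 * H) * H ^ 2 * (2 * H - 1) ^ 2 *
        ∫ t in (0:ℝ)..1, ∫ s in (0:ℝ)..1, ∫ θ in (0:ℝ)..1, ∫ ξ in (0:ℝ)..1,
          t ^ n * ξ ^ n * θ ^ n * Set.indicator (Set.Icc s 1) (fun _ => (1:ℝ)) θ *
            |t - s| ^ (2 * H - 2) * |ξ - θ| ^ (2 * H - 2))
      atTop (nhds (H ^ 2 * (2 * H - 1) * Real.Gamma (2 * H - 1))) :=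
  stmt15_general hH.1
end

section
/- Let H ∈ (1/2, 3/4). For every continuous function φ : [0,1]² → ℝ, lim_{n→∞} (1/n) Σ_{j=1}^n Σ_{l=1}^n ρ_H(j−l)² · φ((j−1)/n, (l−1)/n) = ( Σ_{k ∈ ℤ} ρ_H(k)² ) · ∫₀¹ φ(t,t) dt. -/
open Filter

/-- The fBm autocorrelation sequence `ρ_H(k) = (1/2)(|k+1|^{2H} − 2|k|^{2H} + |k−1|^{2H})`. -/
noncomputable def rhoH (H : ℝ) (k : ℤ) : ℝ :=
  (1/2) * (|(k:ℝ) + 1| ^ (2 * H) - 2 * |(k:ℝ)| ^ (2 * H) + |(k:ℝ) - 1| ^ (2 * H))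

/-!
Put `k = j - l`. For fixed `k`, the sum of `φ` along the `k`-th diagonal of the grid, divided by
`n`, is the integral over `[0, 1]` of the step function `t ↦ φ(⌊nt⌋/n, (⌊nt⌋ - k)/n)`, where `φ`
is extended by zero outside `[0, 1)²`; it is bounded and tends to `∫ φ(t, t) dt` by dominated
convergence. A second dominated convergence, in the sum over `k`, applies because `ρ_H(k)` is a
second difference of `x ↦ x^{2H}`, hence `O(|k|^{2H-2})`, which is square summable for `H < 3/4`.
-/

open MeasureTheory
open scoped Topology

section SecondDifference

lemma exists_second_difference_eq {f f' f'' : ℝ → ℝ} {x h : ℝ} (hh : 0 < h)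
    (hfc : ContinuousOn f (Set.Icc (x - h) (x + h)))
    (hf : ∀ t ∈ Set.Ioo (x - h) (x + h), HasDerivAt f (f' t) t)
    (hf' : ∀ t ∈ Set.Ioo (x - h) (x + h), HasDerivAt f' (f'' t) t) :
    ∃ c ∈ Set.Ioo (x - h) (x + h), f (x + h) - 2 * f x + f (x - h) = f'' c * h ^ 2 := by
  obtain ⟨c, hc, hslope⟩ := exists_hasDerivAt_eq_slope
    (fun t ↦ f (t + h) - f t) (fun t ↦ f' (t + h) - f' t) (sub_lt_self x hh)
    ((hfc.comp (by fun_prop) fun t ht ↦ ⟨by linarith [ht.1], by linarith [ht.2]⟩).sub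
      (hfc.mono (Set.Icc_subset_Icc_right (by linarith))))
    (fun t ht ↦ ((hf (t + h) ⟨by linarith [ht.1], by linarith [ht.2]⟩).comp_add_const t h).sub
      (hf t ⟨ht.1, by linarith [ht.2]⟩))
  have hsub : Set.Icc c (c + h) ⊆ Set.Ioo (x - h) (x + h) :=
    fun t ht ↦ ⟨by linarith [hc.1, ht.1], by linarith [hc.2, ht.2]⟩
  obtain ⟨d, hd, hslope'⟩ := exists_hasDerivAt_eq_slope f' f'' (lt_add_of_pos_right c hh)
    (fun t ht ↦ (hf' t (hsub ht)).continuousAt.continuousWithinAt)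
    (fun t ht ↦ hf' t (hsub (Set.Ioo_subset_Icc_self ht)))
  refine ⟨d, hsub (Set.Ioo_subset_Icc_self hd), ?_⟩
  rw [hslope', hslope, sub_add_cancel, sub_sub_cancel, add_sub_cancel_left]
  field_simp
  ring

lemma abs_second_difference_rpow_le {p x h : ℝ} (hp : p ≤ 2) (hh : 0 < h) (hx : h < x) :
    |(x + h) ^ p - 2 * x ^ p + (x - h) ^ p| ≤ |p * (p - 1)| * (x - h) ^ (p - 2) * h ^ 2 := by
  have hpos : 0 < x - h := sub_pos.2 hx
  have hderiv : ∀ q, ∀ t ∈ Set.Ioo (x - h) (x + h),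
      HasDerivAt (fun t : ℝ ↦ t ^ q) (q * t ^ (q - 1)) t :=
    fun q t ht ↦ Real.hasDerivAt_rpow_const (.inl (hpos.trans ht.1).ne')
  obtain ⟨c, hc, heq⟩ := exists_second_difference_eq hh
    (fun t ht ↦ (Real.continuousAt_rpow_const t p
      (.inl (hpos.trans_le ht.1).ne')).continuousWithinAt)
    (hderiv p) (fun t ht ↦ (hderiv (p - 1) t ht).const_mul p)
  have hexp : p - 1 - 1 = p - 2 := by ring
  have hmono : c ^ (p - 2) ≤ (x - h) ^ (p - 2) :=
    Real.rpow_le_rpow_of_nonpos hpos hc.1.le (by linarith)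
  rw [heq, ← mul_assoc, hexp, abs_mul, abs_mul, abs_of_nonneg (sq_nonneg h),
    Real.abs_rpow_of_nonneg (hpos.trans hc.1).le, abs_of_pos (hpos.trans hc.1)]
  exact mul_le_mul_of_nonneg_right (mul_le_mul_of_nonneg_left hmono (abs_nonneg _)) (sq_nonneg h)

end SecondDifference

section Autocorrelation

lemma rhoH_neg (H : ℝ) (k : ℤ) : rhoH H (-k) = rhoH H k := by
  have hadd : |-(k : ℝ) + 1| = |(k : ℝ) - 1| := by rw [← abs_neg]; ring_nf
  have hsub : |-(k : ℝ) - 1| = |(k : ℝ) + 1| := by rw [← abs_neg]; ring_nf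
  simp only [rhoH, Int.cast_neg, hadd, hsub, abs_neg]
  ring

lemma abs_rhoH_le {H : ℝ} (hH : H ≤ 1) {k : ℤ} (hk : 1 < k) :
    |rhoH H k| ≤ |H * (2 * H - 1)| * ((k : ℝ) - 1) ^ (2 * H - 2) := by
  have hk' : (1 : ℝ) < k := mod_cast hk
  have hdiff := abs_second_difference_rpow_le (p := 2 * H) (by linarith) one_pos hk'
  have hconst : |2 * H * (2 * H - 1)| = 2 * |H * (2 * H - 1)| := by
    rw [mul_assoc, abs_mul, abs_two]
  rw [hconst, one_pow, mul_one] at hdiff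
  rw [rhoH, abs_mul, abs_of_pos one_half_pos, abs_of_pos (by linarith : (0 : ℝ) < k + 1),
    abs_of_pos (by linarith : (0 : ℝ) < k), abs_of_pos (sub_pos.2 hk')]
  linarith

lemma summable_sq_rhoH {H : ℝ} (hH : H < 3 / 4) : Summable fun k : ℤ ↦ rhoH H k ^ 2 := by
  suffices hnat : Summable fun n : ℕ ↦ rhoH H n ^ 2 from
    .of_nat_of_neg hnat (by simpa only [rhoH_neg] using hnat)
  have hpow : Summable fun n : ℕ ↦ ((n + 1 : ℕ) : ℝ) ^ (4 * H - 4) :=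
    (summable_nat_add_iff 1).2 (Real.summable_nat_rpow.2 (by linarith))
  refine (summable_nat_add_iff 2).1
    (.of_nonneg_of_le (fun _ ↦ sq_nonneg _) (fun n ↦ ?_) (hpow.mul_left (|H * (2 * H - 1)| ^ 2)))
  have hle := abs_rhoH_le (by linarith : H ≤ 1) (by lia : 1 < ((n + 2 : ℕ) : ℤ))
  have hcast : (((n + 2 : ℕ) : ℤ) : ℝ) - 1 = (n + 1 : ℕ) := by push_cast; ring
  rw [hcast] at hle
  calc rhoH H (n + 2 : ℕ) ^ 2
      = |rhoH H (n + 2 : ℕ)| ^ 2 := (sq_abs _).symm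
    _ ≤ (|H * (2 * H - 1)| * ((n + 1 : ℕ) : ℝ) ^ (2 * H - 2)) ^ 2 := by gcongr
    _ = |H * (2 * H - 1)| ^ 2 * ((n + 1 : ℕ) : ℝ) ^ (4 * H - 4) := by
      rw [mul_pow, ← Real.rpow_mul_natCast (Nat.cast_nonneg _)]
      ring_nf

end Autocorrelation

section ToeplitzAverage

variable {E : Type*} [NormedAddCommGroup E] [NormedSpace ℝ E]

lemma sum_Icc_one_eq_sum_range {M : Type*} [AddCommMonoid M] (f : ℕ → M) (n : ℕ) :
    ∑ j ∈ Finset.Icc 1 n, f j = ∑ j ∈ Finset.range n, f (j + 1) := by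
  rw [Finset.range_eq_Ico, Finset.sum_Ico_add' f 0 n 1, zero_add,
    Finset.Ico_add_one_right_eq_Icc]

lemma integral_comp_natFloor [CompleteSpace E] (f : ℕ → E) (n : ℕ) :
    ∫ x in (0 : ℝ)..n, f ⌊x⌋₊ = ∑ j ∈ Finset.range n, f j := by
  have hfloor (j : ℕ) : Set.EqOn (fun _ ↦ f j) (fun x : ℝ ↦ f ⌊x⌋₊)
      (Set.uIoo (j : ℝ) (j + 1 : ℕ)) := fun x hx ↦ by
    rw [Set.uIoo_of_le (by simp)] at hx
    have hx' : ⌊x⌋₊ = j := Nat.floor_eq_on_Ico j x ⟨hx.1.le, mod_cast hx.2⟩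
    simp only [hx']
  rw [← Nat.cast_zero, ← intervalIntegral.sum_integral_adjacent_intervals fun j _ ↦
    intervalIntegrable_const.congr_uIoo (hfloor j)]
  refine Finset.sum_congr rfl fun j _ ↦ ?_
  rw [← intervalIntegral.integral_congr_uIoo (hfloor j), intervalIntegral.integral_const]
  simp

lemma integral_comp_natFloor_mul [CompleteSpace E] (f : ℕ → E) {n : ℕ} (hn : n ≠ 0) :
    ∫ t in (0 : ℝ)..1, f ⌊n * t⌋₊ = (n : ℝ)⁻¹ • ∑ j ∈ Finset.range n, f j := by
  rw [intervalIntegral.integral_comp_mul_left (fun x ↦ f ⌊x⌋₊) (Nat.cast_ne_zero.2 hn),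
    mul_zero, mul_one, integral_comp_natFloor]

lemma norm_average_range_le {f : ℕ → E} {M : ℝ} (hM : ∀ j, ‖f j‖ ≤ M) (n : ℕ) :
    ‖(n : ℝ)⁻¹ • ∑ j ∈ Finset.range n, f j‖ ≤ M := by
  have hM0 : 0 ≤ M := (norm_nonneg _).trans (hM 0)
  have hsum := norm_sum_le_of_le (Finset.range n) fun j _ ↦ hM j
  rw [Finset.sum_const, Finset.card_range, nsmul_eq_mul] at hsum
  rw [norm_smul, norm_inv, Real.norm_natCast]
  exact inv_mul_le_of_le_mul₀ n.cast_nonneg hM0 hsum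

lemma tendsto_average_diagonal [CompleteSpace E] {ψ : ℝ × ℝ → E} {M : ℝ}
    (hM : ∀ x, ‖ψ x‖ ≤ M)
    (hψ : ∀ᵐ t, t ∈ Set.Ioo (0 : ℝ) 1 → ContinuousAt ψ (t, t)) (s : ℝ) :
    Tendsto (fun n : ℕ ↦ (n : ℝ)⁻¹ • ∑ j ∈ Finset.range n, ψ (j / n, (j - s) / n)) atTop
      (𝓝 (∫ t in (0 : ℝ)..1, ψ (t, t))) := by
  have hstep (t : ℝ) (ht : 0 ≤ t) :
      Tendsto (fun n : ℕ ↦ ((⌊n * t⌋₊ : ℝ) / n, ((⌊n * t⌋₊ : ℝ) - s) / n)) atTop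
        (𝓝 (t, t)) := by
    have hfst : Tendsto (fun n : ℕ ↦ (⌊n * t⌋₊ : ℝ) / n) atTop (𝓝 t) := by
      simpa only [mul_comm, Function.comp_def] using
        (tendsto_nat_floor_mul_div_atTop ht).comp tendsto_natCast_atTop_atTop
    refine hfst.prodMk_nhds ?_
    simpa only [sub_div, sub_zero] using hfst.sub (tendsto_const_div_atTop_nhds_zero_nat s)
  have hlim := intervalIntegral.tendsto_integral_filter_of_dominated_convergence
    (μ := volume) (a := 0) (b := 1) (l := atTop)
    (F := fun (n : ℕ) t ↦ ψ ((⌊n * t⌋₊ : ℝ) / n, ((⌊n * t⌋₊ : ℝ) - s) / n))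
    (f := fun t ↦ ψ (t, t)) (fun _ ↦ M)
    (.of_forall fun n ↦ ((StronglyMeasurable.of_discrete
      (f := fun j : ℕ ↦ ψ ((j : ℝ) / n, ((j : ℝ) - s) / n))).comp_measurable
        (by fun_prop : Measurable fun t : ℝ ↦ ⌊n * t⌋₊)).aestronglyMeasurable)
    (.of_forall fun n ↦ .of_forall fun t _ ↦ hM _) intervalIntegrable_const (by
      filter_upwards [hψ, volume.ae_ne 1] with t hcont ht1 ht
      rw [Set.uIoc_of_le zero_le_one] at ht
      exact (hcont ⟨ht.1, ht.2.lt_of_ne ht1⟩).tendsto.comp (hstep t ht.1.le))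
  refine hlim.congr' ?_
  filter_upwards [eventually_ne_atTop 0] with n hn
  exact integral_comp_natFloor_mul (fun j ↦ ψ ((j : ℝ) / n, ((j : ℝ) - s) / n)) hn

lemma tendsto_average_toeplitz [CompleteSpace E] {a : ℤ → ℝ} (ha : Summable a)
    {ψ : ℝ × ℝ → E} {M : ℝ} (hM : ∀ x, ‖ψ x‖ ≤ M)
    (hψ : ∀ᵐ t, t ∈ Set.Ioo (0 : ℝ) 1 → ContinuousAt ψ (t, t)) :
    Tendsto
      (fun n : ℕ ↦ (n : ℝ)⁻¹ • ∑ j ∈ Finset.range n, ∑' l : ℤ, a (j - l) • ψ (j / n, l / n))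
      atTop (𝓝 ((∑' k, a k) • ∫ t in (0 : ℝ)..1, ψ (t, t))) := by
  have hlim := tendsto_tsum_of_dominated_convergence (ha.norm.mul_right M)
    (fun k : ℤ ↦ (tendsto_average_diagonal hM hψ k).const_smul (a k))
    (.of_forall fun n k ↦ (norm_smul_le _ _).trans
      (mul_le_mul_of_nonneg_left (norm_average_range_le (fun j ↦ hM _) n) (norm_nonneg _)))
  rw [ha.tsum_smul_const] at hlim
  refine hlim.congr fun n ↦ ?_
  have hsummable (j : ℕ) : Summable fun k : ℤ ↦ a k • ψ (j / n, (j - k) / n) :=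
    .of_norm_bounded (ha.norm.mul_right M) fun k ↦
      (norm_smul_le _ _).trans (mul_le_mul_of_nonneg_left (hM _) (norm_nonneg _))
  have hreindex (j : ℕ) : ∑' k : ℤ, a k • ψ (j / n, (j - k) / n)
      = ∑' l : ℤ, a (j - l) • ψ (j / n, l / n) := by
    rw [← (Equiv.subLeft (j : ℤ)).tsum_eq]
    simp only [Equiv.subLeft_apply, Int.cast_sub, Int.cast_natCast, sub_sub_cancel]
  calc ∑' k, a k • (n : ℝ)⁻¹ • ∑ j ∈ Finset.range n, ψ (j / n, (j - k) / n)
      = ∑' k, (n : ℝ)⁻¹ • ∑ j ∈ Finset.range n, a k • ψ (j / n, (j - k) / n) := by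
        simp only [smul_comm (a _), Finset.smul_sum]
    _ = (n : ℝ)⁻¹ • ∑ j ∈ Finset.range n, ∑' k, a k • ψ (j / n, (j - k) / n) := by
        rw [tsum_const_smul'', Summable.tsum_finsetSum fun j _ ↦ hsummable j]
    _ = _ := by simp only [hreindex]

lemma tsum_smul_indicator_unitSquare {n j : ℕ} (hj : j < n) (a : ℤ → ℝ) (φ : ℝ × ℝ → E) :
    ∑' l : ℤ, a l • (Set.Ico 0 1 ×ˢ Set.Ico 0 1).indicator φ ((j : ℝ) / n, (l : ℝ) / n)
      = ∑ l ∈ Finset.range n, a l • φ ((j : ℝ) / n, (l : ℝ) / n) := by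
  have hn : (0 : ℝ) < n := mod_cast hj.pos
  have hgrid (l : ℤ) : (l : ℝ) / n ∈ Set.Ico (0 : ℝ) 1 ↔ 0 ≤ l ∧ l < n := by
    rw [Set.mem_Ico, le_div_iff₀ hn, zero_mul, div_lt_one hn]
    norm_cast
  have hgrid_nat {m : ℕ} (hm : m < n) : (m : ℝ) / n ∈ Set.Ico (0 : ℝ) 1 := by
    rw [← Int.cast_natCast m, hgrid]
    lia
  rw [tsum_eq_sum (s := (Finset.range n).map Nat.castEmbedding), Finset.sum_map]
  · refine Finset.sum_congr rfl fun l hl ↦ ?_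
    rw [Nat.castEmbedding_apply, Int.cast_natCast, Set.indicator_of_mem
      (Set.mk_mem_prod (hgrid_nat hj) (hgrid_nat (Finset.mem_range.1 hl)))]
  · intro l hl
    have hl' : (l : ℝ) / n ∉ Set.Ico (0 : ℝ) 1 := fun hmem ↦ hl <| by
      obtain ⟨h0, hlt⟩ := (hgrid l).1 hmem
      exact Finset.mem_map.2 ⟨l.toNat, by rw [Finset.mem_range]; lia, Int.toNat_of_nonneg h0⟩
    rw [Set.indicator_of_notMem fun hmem ↦ hl' hmem.2, smul_zero]

lemma tendsto_average_toeplitz_unitSquare [CompleteSpace E] {a : ℤ → ℝ} (ha : Summable a)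
    {φ : ℝ × ℝ → E} {M : ℝ} (hM : ∀ x ∈ Set.Ico (0 : ℝ) 1 ×ˢ Set.Ico (0 : ℝ) 1, ‖φ x‖ ≤ M)
    (hφ : ∀ᵐ t, t ∈ Set.Ioo (0 : ℝ) 1 → ContinuousAt φ (t, t)) :
    Tendsto
      (fun n : ℕ ↦ (n : ℝ)⁻¹ • ∑ j ∈ Finset.range n, ∑ l ∈ Finset.range n,
        a (j - l) • φ (j / n, l / n))
      atTop (𝓝 ((∑' k, a k) • ∫ t in (0 : ℝ)..1, φ (t, t))) := by
  set Q : Set (ℝ × ℝ) := Set.Ico 0 1 ×ˢ Set.Ico 0 1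
  have hQ (t : ℝ) (ht : t ∈ Set.Ioo (0 : ℝ) 1) : Q ∈ 𝓝 (t, t) :=
    prod_mem_nhds (Ico_mem_nhds ht.1 ht.2) (Ico_mem_nhds ht.1 ht.2)
  have hbound (x : ℝ × ℝ) : ‖Q.indicator φ x‖ ≤ M := by
    by_cases hx : x ∈ Q
    · rw [Set.indicator_of_mem hx]
      exact hM x hx
    · rw [Set.indicator_of_notMem hx, norm_zero]
      exact (norm_nonneg _).trans (hM (0, 0) ⟨by simp, by simp⟩)
  have hcont : ∀ᵐ t, t ∈ Set.Ioo (0 : ℝ) 1 → ContinuousAt (Q.indicator φ) (t, t) := by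
    filter_upwards [hφ] with t hct ht
    exact (hct ht).congr <| by
      filter_upwards [hQ t ht] with x hx using (Set.indicator_of_mem hx φ).symm
  have hint : ∫ t in (0 : ℝ)..1, Q.indicator φ (t, t) = ∫ t in (0 : ℝ)..1, φ (t, t) :=
    intervalIntegral.integral_congr_Ioo_of_le zero_le_one fun t ht ↦
      Set.indicator_of_mem (mem_of_mem_nhds (hQ t ht)) φ
  rw [← hint]
  refine (tendsto_average_toeplitz ha hbound hcont).congr fun n ↦ ?_
  congr 1
  exact Finset.sum_congr rfl fun j hj ↦
    tsum_smul_indicator_unitSquare (Finset.mem_range.1 hj) (fun l ↦ a (j - l)) φ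

end ToeplitzAverage

theorem stmt16_general {E : Type*} [NormedAddCommGroup E] [NormedSpace ℝ E] [CompleteSpace E]
    {H : ℝ} (hH : H ∈ Set.Ioo (0 : ℝ) (3 / 4)) {φ : ℝ × ℝ → E} {M : ℝ}
    (hM : ∀ x ∈ Set.Ico (0 : ℝ) 1 ×ˢ Set.Ico (0 : ℝ) 1, ‖φ x‖ ≤ M)
    (hφ : ∀ᵐ t, t ∈ Set.Ioo (0 : ℝ) 1 → ContinuousAt φ (t, t)) :
    Tendsto
      (fun n : ℕ ↦ (1 / (n : ℝ)) • ∑ j ∈ Finset.Icc 1 n, ∑ l ∈ Finset.Icc 1 n,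
        rhoH H ((j : ℤ) - (l : ℤ)) ^ 2 • φ (((j : ℝ) - 1) / n, ((l : ℝ) - 1) / n))
      atTop
      (𝓝 ((∑' k : ℤ, rhoH H k ^ 2) • ∫ t in (0 : ℝ)..1, φ (t, t))) := by
  simpa only [sum_Icc_one_eq_sum_range, one_div, Nat.cast_add, Nat.cast_one,
    add_sub_add_right_eq_sub, add_sub_cancel_right] using
    tendsto_average_toeplitz_unitSquare (summable_sq_rhoH hH.2) hM hφ

/-- Weak convergence of the measures `μ_n`: for `H ∈ (1/2,3/4)` and any continuous
`φ` on `[0,1]²`,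
`(1/n) Σ_{j,l=1}^n ρ_H(j−l)² φ((j−1)/n,(l−1)/n) → (Σ_{k∈ℤ} ρ_H(k)²) ∫₀¹ φ(t,t) dt`. -/
theorem stmt16 (H : ℝ) (hH : H ∈ Set.Ioo (1/2 : ℝ) (3/4)) (φ : ℝ × ℝ → ℝ)
    (hφ : ContinuousOn φ (Set.Icc (0:ℝ) 1 ×ˢ Set.Icc (0:ℝ) 1)) :
    Tendsto
      (fun n : ℕ => (1 / (n:ℝ)) * ∑ j ∈ Finset.Icc 1 n, ∑ l ∈ Finset.Icc 1 n,
        (rhoH H ((j:ℤ) - (l:ℤ))) ^ 2 * φ (((j:ℝ) - 1) / n, ((l:ℝ) - 1) / n))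
      atTop
      (nhds ((∑' k : ℤ, (rhoH H k) ^ 2) * ∫ t in (0:ℝ)..1, φ (t, t))) := by
  obtain ⟨M, hM⟩ := (isCompact_Icc.prod isCompact_Icc).exists_bound_of_continuousOn hφ
  exact stmt16_general ⟨one_half_pos.trans hH.1, hH.2⟩
    (fun x hx ↦ hM x (Set.prod_mono Set.Ico_subset_Icc_self Set.Ico_subset_Icc_self hx))
    (.of_forall fun t ht ↦ hφ.continuousAt
      (prod_mem_nhds (Icc_mem_nhds ht.1 ht.2) (Icc_mem_nhds ht.1 ht.2)))
end

section
/- Let H ∈ (1/2, 1). There exists a constant C_H depending only on H such that for every integer n ≥ 1, | n^{2H} ∫₀¹ ∫₀¹ tⁿ sⁿ |t−s|^{2H−2} ds dt − Γ(2H−1) | ≤ C_H · n^{−1}. -/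
/-!
By symmetry the double integral is twice its part below the diagonal, where the inner integral is a
beta integral; with `a = 2H - 1` this gives the closed form `2 B(x + 1, a) / (2x + a + 1)`. After
multiplication by `x ^ (a + 1)` the quotient by `Γ(a)` is the product of
`x ^ a Γ(x + 1) / Γ(x + 1 + a)` and `2x / (2x + a + 1)`. Log-convexity of `Γ` bounds the first
factor by `1` from above and by `(x / (x + 1 + a)) ^ a` from below, so the product lies between
`(x / (x + 1 + a)) ^ (a + 1)` and `1`, and Bernoulli's inequality bounds its distance to `1`.
-/

open MeasureTheory Set Function
open Real (Gamma Gamma_pos_of_pos Gamma_add_one)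
open ProbabilityTheory (beta beta_pos)

section Triangle

variable {α E : Type*} [LinearOrder α] [TopologicalSpace α] [OrderClosedTopology α]
  [SecondCountableTopology α] [MeasurableSpace α] [OpensMeasurableSpace α]
  [NormedAddCommGroup E] {μ : Measure α} [SFinite μ] {f : α → α → E}

theorem integrableOn_snd_lt_fst_iff (hf : AEStronglyMeasurable (uncurry f) (μ.prod μ)) :
    IntegrableOn (uncurry f) {p | p.2 < p.1} (μ.prod μ) ↔
      (∀ᵐ t ∂μ, IntegrableOn (f t) (Iio t) μ) ∧
        Integrable (fun t ↦ ∫ s in Iio t, ‖f t s‖ ∂μ) μ := by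
  have hT : MeasurableSet {p : α × α | p.2 < p.1} := measurableSet_lt measurable_snd measurable_fst
  have hsection (t : α) : (fun s ↦ {p : α × α | p.2 < p.1}.indicator (uncurry f) (t, s)) =
      (Iio t).indicator (f t) := rfl
  have hnorm (t : α) : (fun s ↦ ‖{p : α × α | p.2 < p.1}.indicator (uncurry f) (t, s)‖) =
      (Iio t).indicator fun s ↦ ‖f t s‖ :=
    funext fun _ ↦ norm_indicator_eq_indicator_norm _ _
  rw [← integrable_indicator_iff hT, integrable_prod_iff (hf.indicator hT)]
  simp only [hnorm, hsection, integrable_indicator_iff measurableSet_Iio,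
    integral_indicator measurableSet_Iio]

theorem integral_integral_eq_two_smul_of_symm_s18 [NormedSpace ℝ E] [NullSingletonClass μ]
    (hf : IntegrableOn (uncurry f) {p | p.2 < p.1} (μ.prod μ)) (hsymm : ∀ t s, f t s = f s t) :
    ∫ t, ∫ s, f t s ∂μ ∂μ = (2 : ℝ) • ∫ t, ∫ s in Iio t, f t s ∂μ ∂μ := by
  set F : α × α → E := {p | p.2 < p.1}.indicator (uncurry f)
  have hF : Integrable F (μ.prod μ) :=
    (integrable_indicator_iff (measurableSet_lt measurable_snd measurable_fst)).2 hf
  have hdecomp (t : α) : f t =ᵐ[μ] fun s ↦ F (t, s) + (F ∘ Prod.swap) (t, s) := by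
    filter_upwards [compl_mem_ae_iff.2 (measure_singleton t)] with s hst
    rcases lt_or_gt_of_ne hst with h | h <;>
      simp [F, h, h.not_gt, hsymm t s]
  have hlower (t : α) : ∫ s, F (t, s) ∂μ = ∫ s in Iio t, f t s ∂μ :=
    integral_indicator measurableSet_Iio
  calc ∫ t, ∫ s, f t s ∂μ ∂μ
      = ∫ t, ∫ s, F (t, s) + (F ∘ Prod.swap) (t, s) ∂μ ∂μ := by
        simp only [integral_congr_ae (hdecomp _)]
    _ = ∫ t, ∫ s, F (t, s) ∂μ ∂μ + ∫ t, ∫ s, F (s, t) ∂μ ∂μ :=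
        integral_integral_add hF hF.swap
    _ = (2 : ℝ) • ∫ t, ∫ s in Iio t, f t s ∂μ ∂μ := by
        rw [← integral_integral_swap (f := fun t s ↦ F (t, s)) hF, two_smul]
        simp only [hlower]

end Triangle

theorem restrict_Ioc_restrict_Iio_of_le {α : Type*} [LinearOrder α] [TopologicalSpace α]
    [OrderClosedTopology α] [MeasurableSpace α] [OpensMeasurableSpace α] (μ : Measure α)
    [NullSingletonClass μ] {a b t : α} (htb : t ≤ b) :
    (μ.restrict (Ioc a b)).restrict (Iio t) = μ.restrict (Ioc a t) := by
  have hinter : Iio t ∩ Ioc a b = Ioo a t := by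
    ext s
    simp only [mem_inter_iff, mem_Iio, mem_Ioc, mem_Ioo]
    exact ⟨fun h ↦ ⟨h.2.1, h.1⟩, fun h ↦ ⟨h.2, h.1, h.2.le.trans htb⟩⟩
  rw [Measure.restrict_restrict measurableSet_Iio, hinter, Measure.restrict_congr_set Ioo_ae_eq_Ioc]

section BetaIntegral

variable {u v t : ℝ}

theorem integral_rpow_mul_sub_rpow (hu : 0 < u) (hv : 0 < v) (ht : 0 < t) :
    ∫ s in (0 : ℝ)..t, s ^ (u - 1) * (t - s) ^ (v - 1) = t ^ (u + v - 1) * beta u v := by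
  have hbeta : Complex.betaIntegral u v = (beta u v : ℝ) := by
    rw [Complex.betaIntegral_eq_Gamma_mul_div _ _ (by simpa) (by simpa), beta]
    push_cast [← Complex.Gamma_ofReal]
    rfl
  rw [← Complex.ofReal_inj, ← intervalIntegral.integral_ofReal, Complex.ofReal_mul,
    Complex.ofReal_cpow ht.le, ← hbeta]
  push_cast
  rw [← Complex.betaIntegral_scaled _ _ ht]
  refine intervalIntegral.integral_congr fun s hs ↦ ?_
  rw [uIcc_of_le ht.le] at hs
  have hst : 0 ≤ t - s := sub_nonneg.2 hs.2
  simp only [Complex.ofReal_cpow hs.1, Complex.ofReal_cpow hst]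
  push_cast
  rfl

theorem intervalIntegrable_rpow_mul_sub_rpow (hu : 0 < u) (hv : 0 < v) (ht : 0 < t) :
    IntervalIntegrable (fun s ↦ s ^ (u - 1) * (t - s) ^ (v - 1)) volume 0 t := by
  apply intervalIntegral.intervalIntegrable_of_integral_ne_zero
  rw [integral_rpow_mul_sub_rpow hu hv ht]
  exact (mul_pos (Real.rpow_pos_of_pos ht _) (beta_pos hu hv)).ne'

end BetaIntegral

section PowerKernel

variable {p q a t : ℝ}

-- The exponent `q + 1 - 1` is the one in the integrand of `B(q + 1, a)`.
theorem mul_abs_sub_rpow_eqOn_Ioc :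
    EqOn (fun s ↦ t ^ p * s ^ q * |t - s| ^ (a - 1))
      (fun s ↦ t ^ p * (s ^ (q + 1 - 1) * (t - s) ^ (a - 1))) (Ioc 0 t) := by
  intro s hs
  simp only [abs_of_nonneg (sub_nonneg.2 hs.2), add_sub_cancel_right, mul_assoc]

theorem setIntegral_Ioc_mul_abs_sub_rpow (hq : -1 < q) (ha : 0 < a) (ht : 0 < t) :
    ∫ s in Ioc 0 t, t ^ p * s ^ q * |t - s| ^ (a - 1) = t ^ (p + q + a) * beta (q + 1) a := by
  rw [setIntegral_congr_fun measurableSet_Ioc mul_abs_sub_rpow_eqOn_Ioc,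
    ← intervalIntegral.integral_of_le ht.le, intervalIntegral.integral_const_mul,
    integral_rpow_mul_sub_rpow (by linarith) ha ht, ← mul_assoc, ← Real.rpow_add ht]
  ring_nf

theorem integrableOn_Ioc_mul_abs_sub_rpow (hq : -1 < q) (ha : 0 < a) (ht : 0 < t) :
    IntegrableOn (fun s ↦ t ^ p * s ^ q * |t - s| ^ (a - 1)) (Ioc 0 t) := by
  rw [integrableOn_congr_fun mul_abs_sub_rpow_eqOn_Ioc measurableSet_Ioc,
    ← intervalIntegrable_iff_integrableOn_Ioc_of_le ht.le]
  exact (intervalIntegrable_rpow_mul_sub_rpow (by linarith) ha ht).const_mul _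

theorem integrableOn_snd_lt_fst_mul_abs_sub_rpow (hq : -1 < q) (ha : 0 < a)
    (hpqa : 0 < p + q + a + 1) :
    IntegrableOn (uncurry fun t s : ℝ ↦ t ^ p * s ^ q * |t - s| ^ (a - 1)) {z | z.2 < z.1}
      ((volume.restrict (Ioc 0 1)).prod (volume.restrict (Ioc 0 1))) := by
  have hmeas : Measurable (uncurry fun t s : ℝ ↦ t ^ p * s ^ q * |t - s| ^ (a - 1)) := by
    unfold uncurry
    fun_prop
  refine (integrableOn_snd_lt_fst_iff hmeas.aestronglyMeasurable).2 ⟨?_, ?_⟩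
  · filter_upwards [ae_restrict_mem measurableSet_Ioc] with t ht
    rw [IntegrableOn, restrict_Ioc_restrict_Iio_of_le _ ht.2]
    exact integrableOn_Ioc_mul_abs_sub_rpow hq ha ht.1
  · have hpow : IntegrableOn (fun t : ℝ ↦ t ^ (p + q + a) * beta (q + 1) a) (Ioc 0 1) := by
      rw [← intervalIntegrable_iff_integrableOn_Ioc_of_le zero_le_one]
      exact (intervalIntegral.intervalIntegrable_rpow' (by linarith)).mul_const _
    refine hpow.congr_fun (fun t ht ↦ ?_) measurableSet_Ioc
    simp only [restrict_Ioc_restrict_Iio_of_le _ ht.2]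
    rw [← setIntegral_Ioc_mul_abs_sub_rpow hq ha ht.1]
    refine setIntegral_congr_fun measurableSet_Ioc fun s hs ↦ (Real.norm_of_nonneg ?_).symm
    have ht_pos : 0 < t := ht.1
    have hs_pos : 0 < s := hs.1
    positivity

theorem integral_integral_Ioc_mul_abs_sub_rpow (hq : -1 < q) (ha : 0 < a)
    (hpqa : 0 < p + q + a + 1) :
    ∫ t in Ioc (0 : ℝ) 1, ∫ s in Ioc 0 t, t ^ p * s ^ q * |t - s| ^ (a - 1) =
      beta (q + 1) a / (p + q + a + 1) := by
  rw [setIntegral_congr_fun measurableSet_Ioc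
      (fun t ht ↦ setIntegral_Ioc_mul_abs_sub_rpow hq ha ht.1),
    ← intervalIntegral.integral_of_le zero_le_one, intervalIntegral.integral_mul_const,
    integral_rpow (.inl (by linarith)), Real.one_rpow, Real.zero_rpow hpqa.ne']
  ring

theorem integral_integral_mul_abs_sub_rpow (hq : -1 < q) (ha : 0 < a) (hqa : 0 < 2 * q + a + 1) :
    ∫ t in (0 : ℝ)..1, ∫ s in (0 : ℝ)..1, t ^ q * s ^ q * |t - s| ^ (a - 1) =
      2 * (beta (q + 1) a / (2 * q + a + 1)) := by
  rw [two_mul q] at hqa ⊢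
  simp only [intervalIntegral.integral_of_le (zero_le_one' ℝ)]
  rw [integral_integral_eq_two_smul_of_symm_s18
      (integrableOn_snd_lt_fst_mul_abs_sub_rpow hq ha hqa)
      (fun t s ↦ by rw [abs_sub_comm, mul_comm (t ^ q)]),
    ← integral_integral_Ioc_mul_abs_sub_rpow hq ha hqa, smul_eq_mul]
  congr 1
  refine setIntegral_congr_fun measurableSet_Ioc fun t ht ↦ ?_
  simp only [restrict_Ioc_restrict_Iio_of_le _ ht.2]

end PowerKernel

section GammaRatio

variable {x a : ℝ}

theorem log_Gamma_add_one_sub_log_Gamma (hx : 0 < x) :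
    Real.log (Gamma (x + 1)) - Real.log (Gamma x) = Real.log x := by
  rw [Gamma_add_one hx.ne', Real.log_mul hx.ne' (Gamma_pos_of_pos hx).ne', add_sub_cancel_right]

theorem Gamma_add_le_rpow_mul_Gamma (hx : 0 < x) (ha : 0 < a) :
    Gamma (x + a) ≤ (x + a) ^ a * Gamma x := by
  have hxa : 0 < x + a := add_pos hx ha
  have hGx : 0 < Gamma x := Gamma_pos_of_pos hx
  have hGxa : 0 < Gamma (x + a) := Gamma_pos_of_pos hxa
  have hslope := Real.convexOn_log_Gamma.slope_mono_adjacent (x := x) (y := x + a) (z := x + a + 1)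
    hx (mem_Ioi.2 (by linarith)) (by linarith) (by linarith)
  simp only [comp_apply, log_Gamma_add_one_sub_log_Gamma hxa, add_sub_cancel_left, div_one]
    at hslope
  rwa [← div_le_iff₀ hGx, Real.le_rpow_iff_log_le (div_pos hGxa hGx) hxa,
    Real.log_div hGxa.ne' hGx.ne', ← div_le_iff₀' ha]

theorem rpow_mul_Gamma_add_one_le_Gamma (hx : 0 < x) (ha : 0 < a) :
    x ^ a * Gamma (x + 1) ≤ Gamma (x + 1 + a) := by
  have hx1a : 0 < x + 1 + a := by linarith
  have hGx1 : 0 < Gamma (x + 1) := Gamma_pos_of_pos (by linarith)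
  have hGx1a : 0 < Gamma (x + 1 + a) := Gamma_pos_of_pos hx1a
  have hslope := Real.convexOn_log_Gamma.slope_mono_adjacent (x := x) (y := x + 1) (z := x + 1 + a)
    hx hx1a (by linarith) (by linarith)
  simp only [comp_apply, log_Gamma_add_one_sub_log_Gamma hx, add_sub_cancel_left, div_one]
    at hslope
  rwa [← le_div_iff₀ hGx1, Real.rpow_le_iff_le_log hx (div_pos hGx1a hGx1),
    Real.log_div hGx1a.ne' hGx1.ne', ← le_div_iff₀' ha]

theorem one_sub_sq_div_le_div_add_rpow {c : ℝ} (hx : 0 < x) (hc : 1 ≤ c) :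
    1 - c ^ 2 / x ≤ (x / (x + c)) ^ c := by
  have hxc : 0 < x + c := by linarith
  calc 1 - c ^ 2 / x ≤ 1 - c ^ 2 / (x + c) := by gcongr; linarith
    _ = 1 + c * -(c / (x + c)) := by ring
    _ ≤ (1 + -(c / (x + c))) ^ c :=
        one_add_mul_self_le_rpow_one_add (neg_le_neg ((div_le_one hxc).2 (by linarith))) hc
    _ = (x / (x + c)) ^ c := by
        congr 1
        field_simp
        ring

theorem rpow_mul_Gamma_div_Gamma_mem_Icc (hx : 0 < x) (ha : 0 < a) :
    x ^ a * Gamma (x + 1) / Gamma (x + 1 + a) ∈ Icc ((x / (x + 1 + a)) ^ a) 1 := by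
  have hx1 : 0 < x + 1 := by linarith
  have hx1a : 0 < x + 1 + a := by linarith
  have hGamma : 0 < Gamma (x + 1 + a) := Gamma_pos_of_pos hx1a
  refine ⟨?_, (div_le_one hGamma).2 (rpow_mul_Gamma_add_one_le_Gamma hx ha)⟩
  rw [Real.div_rpow hx.le hx1a.le, div_le_div_iff₀ (Real.rpow_pos_of_pos hx1a a) hGamma, mul_assoc]
  gcongr
  rw [mul_comm]
  exact Gamma_add_le_rpow_mul_Gamma hx1 ha

theorem rpow_mul_Gamma_div_Gamma_mul_div_mem_Icc (hx : 0 < x) (ha : 0 < a) :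
    x ^ a * Gamma (x + 1) / Gamma (x + 1 + a) * (2 * x / (2 * x + a + 1)) ∈
      Icc (1 - (a + 1) ^ 2 / x) 1 := by
  obtain ⟨hlower, hupper⟩ := rpow_mul_Gamma_div_Gamma_mem_Icc hx ha
  have hfactor_lower : x / (x + 1 + a) ≤ 2 * x / (2 * x + a + 1) := by
    rw [div_le_div_iff₀ (by positivity) (by positivity)]
    nlinarith
  have hfactor_upper : 2 * x / (2 * x + a + 1) ≤ 1 := by
    rw [div_le_one (by positivity)]
    linarith
  refine ⟨?_, mul_le_one₀ hupper (by positivity) hfactor_upper⟩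
  calc 1 - (a + 1) ^ 2 / x ≤ (x / (x + (a + 1))) ^ (a + 1) :=
        one_sub_sq_div_le_div_add_rpow hx (by linarith)
    _ = (x / (x + 1 + a)) ^ a * (x / (x + 1 + a)) := by
        rw [Real.rpow_add_one (by positivity), add_assoc x, add_comm a]
    _ ≤ _ := by gcongr

theorem abs_rpow_mul_beta_sub_Gamma_le (hx : 0 < x) (ha : 0 < a) :
    |x ^ (a + 1) * (2 * (beta (x + 1) a / (2 * x + a + 1))) - Gamma a| ≤
      (a + 1) ^ 2 * Gamma a * x⁻¹ := by
  obtain ⟨hlower, hupper⟩ := rpow_mul_Gamma_div_Gamma_mul_div_mem_Icc hx ha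
  set ρ := x ^ a * Gamma (x + 1) / Gamma (x + 1 + a) * (2 * x / (2 * x + a + 1)) with hρ
  have hGamma : 0 < Gamma a := Gamma_pos_of_pos ha
  calc |x ^ (a + 1) * (2 * (beta (x + 1) a / (2 * x + a + 1))) - Gamma a|
      = |-(Gamma a * (1 - ρ))| := by
        rw [hρ, Real.rpow_add_one hx.ne', beta]
        ring_nf
    _ = Gamma a * (1 - ρ) := by
        rw [abs_neg, abs_of_nonneg (mul_nonneg hGamma.le (sub_nonneg.2 hupper))]
    _ ≤ Gamma a * ((a + 1) ^ 2 / x) := by gcongr; linarith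
    _ = (a + 1) ^ 2 * Gamma a * x⁻¹ := by ring

end GammaRatio

theorem stmt18_general (H : ℝ) (hH : 1 / 2 < H) (x : ℝ) (hx : 0 < x) :
    |x ^ (2 * H) * (∫ t in (0 : ℝ)..1, ∫ s in (0 : ℝ)..1, t ^ x * s ^ x * |t - s| ^ (2 * H - 2))
        - Gamma (2 * H - 1)| ≤ (2 * H) ^ 2 * Gamma (2 * H - 1) * x⁻¹ := by
  have ha : 0 < 2 * H - 1 := by linarith
  have hbound := abs_rpow_mul_beta_sub_Gamma_le hx ha
  rw [← integral_integral_mul_abs_sub_rpow (by linarith) ha (by linarith)] at hbound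
  rwa [sub_add_cancel, sub_sub, one_add_one_eq_two] at hbound

/-- For `H ∈ (1/2,1)` there is a constant `C_H` such that for every `n ≥ 1`,
`|n^{2H} ∫₀¹∫₀¹ tⁿsⁿ|t−s|^{2H−2} ds dt − Γ(2H−1)| ≤ C_H / n`. -/
theorem stmt18 (H : ℝ) (hH : H ∈ Set.Ioo (1/2 : ℝ) 1) :
    ∃ C : ℝ, 0 < C ∧ ∀ n : ℕ, 1 ≤ n →
      |(n:ℝ) ^ (2 * H) * (∫ t in (0:ℝ)..1, ∫ s in (0:ℝ)..1, t ^ n * s ^ n * |t - s| ^ (2 * H - 2))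
          - Real.Gamma (2 * H - 1)|
        ≤ C * (n:ℝ)⁻¹ := by
  have hH0 : 0 < H := by linarith [hH.1]
  have hGamma : 0 < Gamma (2 * H - 1) := Gamma_pos_of_pos (by linarith [hH.1])
  refine ⟨(2 * H) ^ 2 * Gamma (2 * H - 1), by positivity, fun n hn ↦ ?_⟩
  simpa only [Real.rpow_natCast] using stmt18_general H hH.1 n (by exact_mod_cast hn)
end
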